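/- Define the p-transversality graph Γ_p of W: its vertex set is C, with an edge {i,j} whenever components i and j are p-transversal at a point. (1) If Γ_p is a complete graph, then for every nonzero α ∈ A¹, ker(·∧α : A¹ → A²_{W,k}) = k·α; equivalently H¹(A*_{W,k},·∧α) = 0. (2) If Γ_p is connected, then the same conclusion holds for every non-coordinate α ∈ A¹ (α is non-coordinate if α_i ≠ 0 for all i ∈ C). -/

import Mathlib

/-!
The map `∂ : x ∧ y ↦ s(y) x - s(x) y` on `Λ²A_P`, with `s` the sum of the coordinates, kills the
cyclic relations of `I_P`. Hence, at a point where two components meet, each coordinate of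
`∂((β ∧ α)_P)` vanishes when `β ∧ α = 0`, and this is the resonance condition at the corresponding
branch; where only one component passes the condition is void. At a `p`-transversal point of `i` and
`j` the resonance condition reads `(β_i α_j - α_i β_j) μ_P(δ, j) = 0` for every branch `δ` of `i`,
so `β_i α_j = α_i β_j` along the edges of the `p`-transversality graph. An equality of this kind
propagates along paths of the graph whose vertices lie in the support of `α`, their last vertex
excepted: it makes `β` a multiple of `α` as soon as such paths lead from one vertex of the support
to all the components.
-/

open scoped Classical

/-- The weak combinatorial type of a plane projective curve. -/
structure WeakComb (p : ℕ) where
  /-- the set of irreducible components -/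
  C : Type
  [fintypeC : Fintype C]
  [decEqC : DecidableEq C]
  [nonemptyC : Nonempty C]
  /-- the set of singular points -/
  S : Type
  [fintypeS : Fintype S]
  [decEqS : DecidableEq S]
  /-- the local branches at each singular point -/
  Δ : S → Type
  [fintypeΔ : ∀ P, Fintype (Δ P)]
  [decEqΔ : ∀ P, DecidableEq (Δ P)]
  /-- each branch belongs to a component -/
  φ : ∀ P, Δ P → C
  /-- local intersection multiplicities of pairs of branches -/
  μ : ∀ P, Δ P → Δ P → ℕ
  μ_symm : ∀ P δ δ', φ P δ ≠ φ P δ' → μ P δ δ' = μ P δ' δ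
  μ_pos : ∀ P δ δ', φ P δ ≠ φ P δ' → 0 < μ P δ δ'

attribute [instance] WeakComb.fintypeC WeakComb.decEqC WeakComb.nonemptyC
attribute [instance] WeakComb.fintypeS WeakComb.decEqS WeakComb.fintypeΔ WeakComb.decEqΔ

namespace WeakComb

variable {p : ℕ} (W : WeakComb p)

/-- μ_P(δ,δ') with the convention that it vanishes on pairs of branches of the same component. -/
def muk (P : W.S) (δ δ' : W.Δ P) : ℕ :=
  if W.φ P δ = W.φ P δ' then 0 else W.μ P δ δ'

/-- μ_P(δ, j): the multiplicity of intersection of the branch δ with the component j. -/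
def muC (P : W.S) (δ : W.Δ P) (j : W.C) : ℕ :=
  ∑ δ' : W.Δ P, if W.φ P δ' = j then W.muk P δ δ' else 0

/-- A degree assignment: positive degrees satisfying the Bezout condition. -/
def IsDegree (d : W.C → ℕ) : Prop :=
  (∀ i, 0 < d i) ∧
  ∀ i j, i ≠ j →
    d i * d j = ∑ P : W.S, ∑ δ : W.Δ P, if W.φ P δ = i then W.muC P δ j else 0

/-- The basis vector σ_i of A¹ = (C → ZMod p). -/
noncomputable def sigma (i : W.C) : W.C → ZMod p := Pi.single i 1

/-- The basis vector ψ_P^δ of A_P = (Δ_P → ZMod p). -/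
noncomputable def psi (P : W.S) (δ : W.Δ P) : W.Δ P → ZMod p := Pi.single δ 1

/-- ψ_P^δ ∧ ψ_P^δ' as an element of Λ² A_P. -/
noncomputable def psiW (P : W.S) (δ δ' : W.Δ P) : ⋀[ZMod p]^2 (W.Δ P → ZMod p) :=
  ⟨ExteriorAlgebra.ιMulti (ZMod p) 2 ![W.psi P δ, W.psi P δ'],
   ExteriorAlgebra.ιMulti_range (ZMod p) 2 (Set.mem_range_self _)⟩

/-- The subspace I_P of Λ² A_P. -/
noncomputable def IP (P : W.S) : Submodule (ZMod p) (⋀[ZMod p]^2 (W.Δ P → ZMod p)) :=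
  Submodule.span (ZMod p)
    ({x | ∃ δ1 δ2 δ3 : W.Δ P, x = W.psiW P δ1 δ2 + W.psiW P δ2 δ3 + W.psiW P δ3 δ1} ∪
     {x | (∀ δ δ' : W.Δ P, W.φ P δ = W.φ P δ') ∧ ∃ δ1 δ2 : W.Δ P, x = W.psiW P δ1 δ2})

/-- The degree-two part A² = A^{2,0} ⊕ A^{2,∞} of the Combinatorial Aomoto algebra. -/
abbrev A2 (d : W.C → ℕ) : Type :=
  ((P : W.S) → (⋀[ZMod p]^2 (W.Δ P → ZMod p)) ⧸ W.IP P) ×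
  ({i : W.C // p ∣ d i} → ZMod p)

/-- The wedge product A¹ × A¹ → A², extending σ_i ∧ σ_j bilinearly. -/
noncomputable def wedge (d : W.C → ℕ) (α β : W.C → ZMod p) : W.A2 d :=
  (fun P => ∑ δ : W.Δ P, ∑ δ' : W.Δ P,
      (α (W.φ P δ) * β (W.φ P δ') * (W.muk P δ δ' : ZMod p)) •
        Submodule.Quotient.mk (W.psiW P δ δ'),
   fun i => α i.1 * (∑ j : W.C, (d j : ZMod p) * β j)
          - β i.1 * (∑ j : W.C, (d j : ZMod p) * α j))

/-- The linear map ·∧α : A¹ → A², β ↦ β ∧ α. -/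
noncomputable def wedgeL (d : W.C → ℕ) (α : W.C → ZMod p) :
    (W.C → ZMod p) →ₗ[ZMod p] W.A2 d where
  toFun β := W.wedge d β α
  map_add' β γ := by
    refine Prod.ext ?_ ?_
    · funext P
      simp only [wedge, Pi.add_apply, Prod.fst_add]
      rw [← Finset.sum_add_distrib]
      refine Finset.sum_congr rfl fun δ _ => ?_
      rw [← Finset.sum_add_distrib]
      refine Finset.sum_congr rfl fun δ' _ => ?_
      rw [← add_smul, add_mul, add_mul]
    · funext i
      simp only [wedge, Pi.add_apply, Prod.snd_add]
      rw [show (∑ x : W.C, (d x : ZMod p) * (β x + γ x))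
            = (∑ x : W.C, (d x : ZMod p) * β x) + ∑ x : W.C, (d x : ZMod p) * γ x by
        rw [← Finset.sum_add_distrib]; exact Finset.sum_congr rfl fun x _ => by ring]
      ring
  map_smul' c β := by
    refine Prod.ext ?_ ?_
    · funext P
      simp only [wedge, Pi.smul_apply, smul_eq_mul, RingHom.id_apply, Prod.smul_fst]
      rw [Finset.smul_sum]
      refine Finset.sum_congr rfl fun δ _ => ?_
      rw [Finset.smul_sum]
      refine Finset.sum_congr rfl fun δ' _ => ?_
      rw [smul_smul]
      ring_nf
    · funext i
      simp only [wedge, Pi.smul_apply, smul_eq_mul, RingHom.id_apply, Prod.smul_snd]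
      rw [show (∑ x : W.C, (d x : ZMod p) * (c * β x)) = c * ∑ x : W.C, (d x : ZMod p) * β x by
        rw [Finset.mul_sum]; exact Finset.sum_congr rfl fun x _ => by ring]
      ring

/-- The kernel of ·∧α : A¹ → A². -/
noncomputable def wedgeKer (d : W.C → ℕ) (α : W.C → ZMod p) :
    Submodule (ZMod p) (W.C → ZMod p) :=
  LinearMap.ker (W.wedgeL d α)

/-- H¹ of the Combinatorial Aomoto complex with differential ·∧α. -/
noncomputable abbrev H1 (d : W.C → ℕ) (α : W.C → ZMod p) :=
  (W.wedgeKer d α) ⧸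
    (Submodule.comap (W.wedgeKer d α).subtype (Submodule.span (ZMod p) {α}))

end WeakComb

namespace WeakComb

variable {p : ℕ} (W : WeakComb p)

/-- The resonance condition for (α,β) at the branch δ of the point P. -/
def ResCond (α β : W.C → ZMod p) (P : W.S) (δ : W.Δ P) : Prop :=
  β (W.φ P δ) * (∑ j : W.C, (W.muC P δ j : ZMod p) * α j)
    - α (W.φ P δ) * (∑ j : W.C, (W.muC P δ j : ZMod p) * β j) = 0

/-- P is a p-transversal point for the pair of components i ≠ j. -/
def PTransPoint (P : W.S) (i j : W.C) : Prop :=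
  i ≠ j ∧ (∀ δ : W.Δ P, W.φ P δ = i ∨ W.φ P δ = j) ∧
  (∃ δ : W.Δ P, W.φ P δ = i) ∧ (∃ δ : W.Δ P, W.φ P δ = j) ∧
  ((∃ δ : W.Δ P, W.φ P δ = i ∧ ((W.muC P δ j : ZMod p) ≠ 0)) ∨
   (∃ δ : W.Δ P, W.φ P δ = j ∧ ((W.muC P δ i : ZMod p) ≠ 0)))

/-- The components i and j are p-transversal at a point. -/
def PTransComponents (i j : W.C) : Prop := ∃ P : W.S, W.PTransPoint P i j

/-- α is non-coordinate if all its coordinates are nonzero. -/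
def NonCoordinate (α : W.C → ZMod p) : Prop := ∀ i, α i ≠ 0

end WeakComb

/-- The setoid (partition) obtained from s by merging the classes of c₀ and c₁. -/
def mergeSetoid {α : Type*} (s : Setoid α) (c₀ c₁ : α) : Setoid α :=
  Relation.EqvGen.setoid (fun a b => s.r a b ∨ (a = c₀ ∧ b = c₁))

namespace WeakComb

variable {p : ℕ} (W : WeakComb p)

/-- W is p-transversal at P with respect to (α, π), where the surjection π is encoded by the
setoid s of its fibres; the two classes π(φ_P(Δ_P)) = {i',j'} are those of c₀ and c₁. -/
def PTransversalAt (α : W.C → ZMod p) (s : Setoid W.C) (P : W.S) (c₀ c₁ : W.C) : Prop :=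
  ¬ s.r c₀ c₁ ∧
  (∀ δ : W.Δ P, s.r (W.φ P δ) c₀ ∨ s.r (W.φ P δ) c₁) ∧
  (∃ δ : W.Δ P, s.r (W.φ P δ) c₀) ∧ (∃ δ : W.Δ P, s.r (W.φ P δ) c₁) ∧
  ∃ δ : W.Δ P, s.r (W.φ P δ) c₀ ∧
    (∑ δ' : W.Δ P, if s.r (W.φ P δ') c₁
        then (W.muk P δ δ' : ZMod p) * α (W.φ P δ') else 0) ≠ 0

/-- A p-reduction step with respect to α. -/
def RedStep (α : W.C → ZMod p) (s s' : Setoid W.C) : Prop :=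
  ∃ (P : W.S) (c₀ c₁ : W.C), W.PTransversalAt α s P c₀ c₁ ∧ s' = mergeSetoid s c₀ c₁

/-- W is completely p-reductive with respect to α: starting from the identity partition (⊥),
some finite sequence of p-reduction steps reaches the one-class partition (⊤). -/
def CompletelyPReductive (α : W.C → ZMod p) : Prop :=
  Relation.ReflTransGen (W.RedStep α) ⊥ ⊤

/-- β is π-proportional to α, for the surjection π encoded by the setoid s: on each class
of s, β is a scalar multiple of α. -/
def Proportional (s : Setoid W.C) (α β : W.C → ZMod p) : Prop :=
  ∀ c : W.C, ∃ l : ZMod p, ∀ c', s.r c c' → β c' = l * α c'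

end WeakComb

/-- A combinatorial quasi-fiber structure of rank r on W. -/
structure QuasiFiber {p : ℕ} (W : WeakComb p) (r : ℕ) where
  /-- which quasi-fiber each component belongs to -/
  g : W.C → Fin r
  g_surj : Function.Surjective g
  /-- multiplicities of components inside the quasi-fibers -/
  m : W.C → ℕ
  m_pos : ∀ c, 0 < m c
  /-- the set of base points -/
  B : Set W.S
  fiber_off_base : ∀ P : W.S, P ∉ B → ∀ δ δ' : W.Δ P, g (W.φ P δ) = g (W.φ P δ')

namespace WeakComb

variable {p : ℕ} (W : WeakComb p) {r : ℕ}

/-- M_s(δ) for a branch δ at a base point P. -/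
noncomputable def Mcoef (F : QuasiFiber W r) (P : W.S) (δ : W.Δ P) (s : Fin r) : ZMod p :=
  ∑ δ' : W.Δ P,
    if W.φ P δ' ≠ W.φ P δ ∧ F.g (W.φ P δ') = s
      then ((F.m (W.φ P δ') * W.μ P δ δ' : ℕ) : ZMod p) else 0

/-- ω_a = Σ_c m_c · a_{g(c)} · σ_c ∈ A¹. -/
noncomputable def omega (F : QuasiFiber W r) (a : Fin r → ZMod p) : W.C → ZMod p :=
  fun c => (F.m c : ZMod p) * a (F.g c)

/-- The restricted combinatorics W°_s of the quasi-fiber s. -/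
noncomputable def restrict (F : QuasiFiber W r) (s : Fin r) : WeakComb p where
  C := {c : W.C // F.g c = s}
  fintypeC := Fintype.ofFinite _
  decEqC := inferInstance
  nonemptyC := by obtain ⟨c, hc⟩ := F.g_surj s; exact ⟨⟨c, hc⟩⟩
  S := {P : W.S // Nonempty (W.Δ P) ∧ ∀ δ : W.Δ P, F.g (W.φ P δ) = s}
  fintypeS := Fintype.ofFinite _
  decEqS := inferInstance
  Δ := fun P => W.Δ P.1
  fintypeΔ := fun P => inferInstance
  decEqΔ := fun P => inferInstance
  φ := fun P δ => ⟨W.φ P.1 δ, P.2.2 δ⟩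
  μ := fun P δ δ' => W.μ P.1 δ δ'
  μ_symm := fun P δ δ' h => W.μ_symm P.1 δ δ' (fun e => h (Subtype.ext e))
  μ_pos := fun P δ δ' h => W.μ_pos P.1 δ δ' (fun e => h (Subtype.ext e))

/-- The restriction ω_a|_s of ω_a to the restricted combinatorics W°_s. -/
noncomputable def omegaRes (F : QuasiFiber W r) (a : Fin r → ZMod p) (s : Fin r) :
    (W.restrict F s).C → ZMod p :=
  fun c => (F.m c.1 : ZMod p) * a s

end WeakComb

section Statements

open WeakComb

variable {p : ℕ} [Fact p.Prime]

section Proportionality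

variable {ι : Type*}

theorem mul_eq_mul_of_reflTransGen {M₀ : Type*} [CommMonoidWithZero M₀] [IsLeftCancelMulZero M₀]
    {r : ι → ι → Prop} {x y : ι → M₀}
    (hr : ∀ i j, r i j → x i ≠ 0 ∧ y i * x j = x i * y j) {k i : ι}
    (hki : Relation.ReflTransGen r k i) : y k * x i = x k * y i := by
  induction hki with
  | refl => exact mul_comm _ _
  | @tail i j _ hij ih =>
    obtain ⟨hi, hyx⟩ := hr i j hij
    refine mul_left_cancel₀ hi ?_
    calc x i * (y k * x j) = y k * x i * x j := by ac_rfl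
      _ = x k * (y i * x j) := by rw [ih, mul_assoc]
      _ = x i * (x k * y j) := by rw [hyx, mul_left_comm]

theorem mem_span_singleton_of_forall_mul_eq_mul {K : Type*} [Field K] {x y : ι → K} {k : ι}
    (hk : x k ≠ 0) (h : ∀ i, y k * x i = x k * y i) : y ∈ Submodule.span K {x} := by
  refine Submodule.mem_span_singleton.2 ⟨y k / x k, funext fun i => ?_⟩
  rw [Pi.smul_apply, smul_eq_mul, div_mul_eq_mul_div, div_eq_iff hk, h i, mul_comm]

end Proportionality

theorem sum_sum_eq_zero_of_alternating {ι M : Type*} [Fintype ι] [AddCommMonoid M]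
    {f : ι → ι → M} (hself : ∀ i, f i i = 0) (hswap : ∀ i j, f i j + f j i = 0) :
    ∑ i, ∑ j, f i j = 0 := by
  rw [← Finset.sum_product']
  refine Finset.sum_involution (fun x _ => x.swap) (fun x _ => hswap x.1 x.2) ?_
    (fun _ _ => Finset.mem_univ _) (fun x _ => x.swap_swap)
  rintro ⟨i, j⟩ - hij hfix
  obtain rfl : j = i := congrArg Prod.fst hfix
  exact hij (hself j)

namespace WeakComb

variable {n : ℕ} (W : WeakComb n)

section Multiplicities

variable {W} {P : W.S} {δ : W.Δ P}

theorem muk_comm (δ δ' : W.Δ P) : W.muk P δ δ' = W.muk P δ' δ := by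
  unfold muk
  split_ifs with h h' h'
  · rfl
  · exact absurd h.symm h'
  · exact absurd h'.symm h
  · exact W.μ_symm P δ δ' h

theorem muk_eq_zero {δ' : W.Δ P} (h : W.φ P δ = W.φ P δ') : W.muk P δ δ' = 0 :=
  if_pos h

theorem muC_eq_zero {j : W.C} (h : ∀ δ', W.φ P δ' = j → W.φ P δ = W.φ P δ') :
    W.muC P δ j = 0 :=
  Finset.sum_eq_zero fun δ' _ => by
    split_ifs with hj
    · exact muk_eq_zero (h δ' hj)
    · rfl

theorem sum_muC_mul {R : Type*} [CommSemiring R] (δ : W.Δ P) (γ : W.C → R) :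
    ∑ j, (W.muC P δ j : R) * γ j = ∑ δ', (W.muk P δ δ' : R) * γ (W.φ P δ') := by
  simp only [muC, Nat.cast_sum, Nat.cast_ite, Nat.cast_zero, Finset.sum_mul, ite_mul, zero_mul]
  rw [Finset.sum_comm]
  simp only [Finset.sum_ite_eq, Finset.mem_univ, if_true]

theorem sum_muC_mul_eq_single {R : Type*} [CommSemiring R] {i j : W.C} (hδ : W.φ P δ = i)
    (hP : ∀ δ', W.φ P δ' = i ∨ W.φ P δ' = j) (γ : W.C → R) :
    ∑ c, (W.muC P δ c : R) * γ c = W.muC P δ j * γ j := by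
  refine Fintype.sum_eq_single j fun c hcj => ?_
  rw [muC_eq_zero, Nat.cast_zero, zero_mul]
  rintro δ' rfl
  exact hδ.trans ((hP δ').resolve_right hcj).symm

end Multiplicities

section LocalProduct

/-- The component at `P` of the product `α ∧ β`, as an element of `Λ²A_P`, before passing to the
quotient by `I_P`. -/
noncomputable def localWedge (α β : W.C → ZMod n) (P : W.S) : ⋀[ZMod n]^2 (W.Δ P → ZMod n) :=
  ∑ δ, ∑ δ', (α (W.φ P δ) * β (W.φ P δ') * (W.muk P δ δ' : ZMod n)) • W.psiW P δ δ'

theorem wedge_fst (d : W.C → ℕ) (α β : W.C → ZMod n) (P : W.S) :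
    (W.wedge d α β).1 P = (W.IP P).mkQ (W.localWedge α β P) := by
  simp only [wedge, localWedge, map_sum, map_smul, Submodule.mkQ_apply]

theorem psiW_eq_ιMulti (P : W.S) (δ δ' : W.Δ P) :
    W.psiW P δ δ' = exteriorPower.ιMulti (ZMod n) 2 ![W.psi P δ, W.psi P δ'] :=
  rfl

theorem psiW_add_swap (P : W.S) (δ δ' : W.Δ P) : W.psiW P δ δ' + W.psiW P δ' δ = 0 := by
  have h := (exteriorPower.ιMulti (ZMod n) 2).map_add_swap ![W.psi P δ, W.psi P δ'] zero_ne_one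
  rwa [Matrix.cons_cons_comp_swap_zero_one] at h

theorem localWedge_self (α : W.C → ZMod n) (P : W.S) : W.localWedge α α P = 0 := by
  refine sum_sum_eq_zero_of_alternating (fun δ => ?_) (fun δ δ' => ?_)
  · rw [muk_eq_zero rfl, Nat.cast_zero, mul_zero, zero_smul]
  · rw [muk_comm δ' δ, mul_comm (α (W.φ P δ')), ← smul_add, psiW_add_swap, smul_zero]

theorem wedge_self (d : W.C → ℕ) (α : W.C → ZMod n) : W.wedge d α α = 0 := by
  refine Prod.ext (funext fun P => ?_) (funext fun i => sub_self _)
  rw [wedge_fst, localWedge_self, map_zero, Prod.fst_zero, Pi.zero_apply]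

end LocalProduct

section Boundary

/-- The `δ`-th coordinate of the Orlik–Solomon boundary `x ∧ y ↦ s(y) x - s(x) y` on `Λ²A_P`, where
`s` is the sum of the coordinates, written as the pairing with `δ^* ∧ s`. -/
noncomputable def boundaryCoord (P : W.S) (δ : W.Δ P) :
    Module.Dual (ZMod n) (⋀[ZMod n]^2 (W.Δ P → ZMod n)) :=
  exteriorPower.pairingDual (ZMod n) (W.Δ P → ZMod n) 2
    (exteriorPower.ιMulti (ZMod n) 2 ![LinearMap.proj δ, ∑ δ', LinearMap.proj δ'])

theorem boundaryCoord_psiW (P : W.S) (δ δ₁ δ₂ : W.Δ P) :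
    W.boundaryCoord P δ (W.psiW P δ₁ δ₂) =
      (if δ₁ = δ then 1 else 0) - (if δ₂ = δ then 1 else 0) := by
  rw [psiW_eq_ιMulti, boundaryCoord, exteriorPower.pairingDual_ιMulti_ιMulti, Matrix.det_fin_two]
  simp [psi, Pi.single_apply, eq_comm]

theorem boundaryCoord_eq_zero_of_mem_IP {P : W.S} {x : ⋀[ZMod n]^2 (W.Δ P → ZMod n)}
    (hP : ∃ δ₁ δ₂, W.φ P δ₁ ≠ W.φ P δ₂) (hx : x ∈ W.IP P) (δ : W.Δ P) :
    W.boundaryCoord P δ x = 0 := by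
  suffices h : W.IP P ≤ LinearMap.ker (W.boundaryCoord P δ) from h hx
  rw [IP, Submodule.span_le]
  rintro x (⟨δ₁, δ₂, δ₃, rfl⟩ | ⟨hφ, -⟩)
  · simp only [SetLike.mem_coe, LinearMap.mem_ker, map_add, boundaryCoord_psiW]
    ring
  · obtain ⟨δ₁, δ₂, h⟩ := hP
    exact absurd (hφ δ₁ δ₂) h

theorem boundaryCoord_localWedge (α β : W.C → ZMod n) (P : W.S) (δ : W.Δ P) :
    W.boundaryCoord P δ (W.localWedge β α P) =
      β (W.φ P δ) * (∑ j, (W.muC P δ j : ZMod n) * α j)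
        - α (W.φ P δ) * (∑ j, (W.muC P δ j : ZMod n) * β j) := by
  simp only [localWedge, map_sum, map_smul, boundaryCoord_psiW, smul_eq_mul, mul_sub, mul_ite,
    mul_one, mul_zero, Finset.sum_sub_distrib]
  rw [Finset.sum_comm]
  simp only [Finset.sum_ite_eq', Finset.mem_univ, if_true, sum_muC_mul, Finset.mul_sum]
  congr 1 <;> refine Finset.sum_congr rfl fun δ' _ => ?_
  · ring
  · rw [muk_comm δ' δ]
    ring

end Boundary

section Resonance

variable {W} {d : W.C → ℕ}

theorem resCond_of_wedge_eq_zero {α β : W.C → ZMod n} (h : W.wedge d β α = 0) (P : W.S)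
    (δ : W.Δ P) : W.ResCond α β P δ := by
  by_cases hP : ∃ δ₁ δ₂, W.φ P δ₁ ≠ W.φ P δ₂
  · have hmem : W.localWedge β α P ∈ W.IP P := by
      rw [← Submodule.ker_mkQ (W.IP P), LinearMap.mem_ker, ← wedge_fst W d, h, Prod.fst_zero,
        Pi.zero_apply]
    rw [ResCond, ← boundaryCoord_localWedge]
    exact W.boundaryCoord_eq_zero_of_mem_IP hP hmem δ
  · push Not at hP
    have hmuC : ∀ j, W.muC P δ j = 0 := fun j => muC_eq_zero fun δ' _ => hP δ δ'
    simp only [ResCond, hmuC, Nat.cast_zero, zero_mul, Finset.sum_const_zero, mul_zero, sub_self]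

theorem minor_mul_muC_eq_zero_of_resCond {α β : W.C → ZMod n} {P : W.S} {δ : W.Δ P} {i j : W.C}
    (h : W.ResCond α β P δ) (hδ : W.φ P δ = i) (hP : ∀ δ', W.φ P δ' = i ∨ W.φ P δ' = j) :
    (β i * α j - α i * β j) * (W.muC P δ j : ZMod n) = 0 := by
  rw [ResCond, sum_muC_mul_eq_single hδ hP, sum_muC_mul_eq_single hδ hP, hδ] at h
  linear_combination h

theorem mul_eq_mul_of_pTransComponents {W : WeakComb p} {d : W.C → ℕ} {α β : W.C → ZMod p}
    (h : W.wedge d β α = 0) {i j : W.C} (hij : W.PTransComponents i j) : β i * α j = α i * β j := by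
  obtain ⟨P, -, hP, -, -, ⟨δ, hδ, hμ⟩ | ⟨δ, hδ, hμ⟩⟩ := hij
  all_goals have hres := resCond_of_wedge_eq_zero h P δ
  · exact sub_eq_zero.1 <|
      (mul_eq_zero.1 (minor_mul_muC_eq_zero_of_resCond hres hδ hP)).resolve_right hμ
  · have hminor : β j * α i - α j * β i = 0 := (mul_eq_zero.1 <|
      minor_mul_muC_eq_zero_of_resCond hres hδ fun δ' => (hP δ').symm).resolve_right hμ
    linear_combination -hminor

end Resonance

theorem span_le_ker_wedgeL (d : W.C → ℕ) (α : W.C → ZMod n) :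
    Submodule.span (ZMod n) {α} ≤ LinearMap.ker (W.wedgeL d α) :=
  (Submodule.span_singleton_le_iff_mem _ _).2 (W.wedge_self d α)

theorem subsingleton_H1_iff (d : W.C → ℕ) (α : W.C → ZMod n) :
    Subsingleton (W.H1 d α) ↔
      LinearMap.ker (W.wedgeL d α) ≤ Submodule.span (ZMod n) {α} := by
  rw [Submodule.Quotient.subsingleton_iff, Submodule.comap_subtype_eq_top, wedgeKer]

end WeakComb

theorem stmt5_general (W : WeakComb p) (d : W.C → ℕ) {α : W.C → ZMod p} {k : W.C} (hk : α k ≠ 0)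
    (hα : ∀ i, Relation.ReflTransGen (fun a b => α a ≠ 0 ∧ W.PTransComponents a b) k i) :
    LinearMap.ker (W.wedgeL d α) = Submodule.span (ZMod p) {α} ∧ Subsingleton (W.H1 d α) := by
  have hker : LinearMap.ker (W.wedgeL d α) ≤ Submodule.span (ZMod p) {α} := by
    intro β (hβ : W.wedge d β α = 0)
    refine mem_span_singleton_of_forall_mul_eq_mul hk fun i => ?_
    exact mul_eq_mul_of_reflTransGen
      (fun _ _ hab => ⟨hab.1, mul_eq_mul_of_pTransComponents hβ hab.2⟩) (hα i)
  exact ⟨hker.antisymm (W.span_le_ker_wedgeL d α), (W.subsingleton_H1_iff d α).2 hker⟩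

/-- Proposition `pairwiseptransversal`. -/
theorem stmt5 (W : WeakComb p) (d : W.C → ℕ) (hd : W.IsDegree d) :
    ((∀ i j : W.C, i ≠ j → W.PTransComponents i j) →
      ∀ α : W.C → ZMod p, α ≠ 0 →
        LinearMap.ker (W.wedgeL d α) = Submodule.span (ZMod p) {α} ∧
        Subsingleton (W.H1 d α)) ∧
    ((∀ i j : W.C, Relation.ReflTransGen W.PTransComponents i j) →
      ∀ α : W.C → ZMod p, W.NonCoordinate α →
        LinearMap.ker (W.wedgeL d α) = Submodule.span (ZMod p) {α} ∧
        Subsingleton (W.H1 d α)) := by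
  refine ⟨fun hT α hα => ?_, fun hT α hα => ?_⟩
  · obtain ⟨k, hk⟩ := Function.ne_iff.1 hα
    exact stmt5_general W d hk fun i =>
      (eq_or_ne k i).elim (· ▸ .refl) fun hki => .single ⟨hk, hT k i hki⟩
  · exact stmt5_general W d (hα (Classical.arbitrary W.C)) fun i =>
      Relation.ReflTransGen.mono (fun j _ hj => ⟨hα j, hj⟩) _ _ (hT _ i)

end Statements
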